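/- Let E be a relation on the finite set {1,…,n} (a directed graph G, with E i j meaning an edge from i to j). Define the auxiliary directed graph G' on the vertex set {1,…,n} × {wT, wQ, xT, xQ} with edge set consisting of: (i,wQ) → (i,wT) for every i; (i,wT) → (j,xT) for every pair (i,j) with E i j; (i,xT) → (i,xQ) for every i; and (i,xQ) → (i,wQ) for every i. Then for all i, i' ∈ {1,…,n}, the vertex (i,wQ) reaches the vertex (i',wT) in G' (under the reflexive-transitive closure of the edge relation of G') if and only if i reaches i' in G (under the reflexive-transitive closure of E). Consequently, for a subset S ⊆ {1,…,n}, every vertex of the form (i,wQ) reaches some vertex in {(s,wT) : s ∈ S} in G' if and only if every node i reaches some node of S in G. -/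

import Mathlib

/-!
Forgetting the tags maps each edge of `G'` to an edge of `G` or to a trivial path, so paths
in `G'` project to paths in `G`. Conversely, an edge `i → j` of `G` lifts to the path
`(i,wT) → (j,xT) → (j,xQ) → (j,wQ) → (j,wT)`, so reachability in `G` lifts to reachability
between the `wT` copies, and it remains to prepend the edge `(i,wQ) → (i,wT)`.
-/

/-- The four tags for copies of a node in the auxiliary graph of a free-parameter
structured system. -/
inductive AuxTag : Type
  | wT | wQ | xT | xQ
deriving DecidableEq

open AuxTag in
/-- The edge relation of the auxiliary graph `G'` on `Fin n × AuxTag` built from the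
edge relation `E` of a directed graph `G` on `Fin n`:
`(i,wQ) → (i,wT)`, `(i,wT) → (j,xT)` whenever `E i j`, `(i,xT) → (i,xQ)`, and
`(i,xQ) → (i,wQ)`. -/
def auxEdge {n : ℕ} (E : Fin n → Fin n → Prop) :
    Fin n × AuxTag → Fin n × AuxTag → Prop := fun a b =>
  (a.2 = wQ ∧ b.2 = wT ∧ a.1 = b.1) ∨
  (a.2 = wT ∧ b.2 = xT ∧ E a.1 b.1) ∨
  (a.2 = xT ∧ b.2 = xQ ∧ a.1 = b.1) ∨
  (a.2 = xQ ∧ b.2 = wQ ∧ a.1 = b.1)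

theorem reach_fst_of_reach_aux {n : ℕ} {E : Fin n → Fin n → Prop} {a b : Fin n × AuxTag}
    (h : Relation.ReflTransGen (auxEdge E) a b) : Relation.ReflTransGen E a.1 b.1 := by
  refine Relation.ReflTransGen.lift' Prod.fst ?_ _ _ h
  rintro ⟨i, s⟩ ⟨j, t⟩ (⟨-, -, hij⟩ | ⟨-, -, hij⟩ | ⟨-, -, hij⟩ | ⟨-, -, hij⟩)
  · obtain rfl : i = j := hij
    exact .refl
  · exact .single hij
  · obtain rfl : i = j := hij
    exact .refl
  · obtain rfl : i = j := hij
    exact .refl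

open AuxTag in
theorem reach_aux_wT_of_reach {n : ℕ} {E : Fin n → Fin n → Prop} {i j : Fin n}
    (h : Relation.ReflTransGen E i j) :
    Relation.ReflTransGen (auxEdge E) (i, wT) (j, wT) := by
  refine Relation.ReflTransGen.lift' (fun k => (k, wT)) (fun k l hkl => ?_) _ _ h
  have h₁ : auxEdge E (k, wT) (l, xT) := by simp [auxEdge, hkl]
  have h₂ : auxEdge E (l, xT) (l, xQ) := by simp [auxEdge]
  have h₃ : auxEdge E (l, xQ) (l, wQ) := by simp [auxEdge]
  have h₄ : auxEdge E (l, wQ) (l, wT) := by simp [auxEdge]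
  exact (((Relation.ReflTransGen.single h₁).tail h₂).tail h₃).tail h₄

open AuxTag in
/-- In the auxiliary graph `G'`, the vertex `(i, wQ)` reaches `(i', wT)`
iff `i` reaches `i'` in `G`; consequently every `(i, wQ)` reaches `{(s, wT) : s ∈ S}`
iff every node of `G` reaches some node of `S`. -/
theorem aux_graph_reachability {n : ℕ} (E : Fin n → Fin n → Prop) :
    (∀ i i' : Fin n,
      Relation.ReflTransGen (auxEdge E) (i, wQ) (i', wT) ↔
        Relation.ReflTransGen E i i')
    ∧ (∀ S : Set (Fin n),
        (∀ i : Fin n, ∃ s ∈ S,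
          Relation.ReflTransGen (auxEdge E) (i, wQ) (s, wT)) ↔
        (∀ i : Fin n, ∃ s ∈ S, Relation.ReflTransGen E i s)) := by
  have key : ∀ i i' : Fin n, Relation.ReflTransGen (auxEdge E) (i, wQ) (i', wT) ↔
      Relation.ReflTransGen E i i' := fun i i' =>
    ⟨reach_fst_of_reach_aux, fun h => .head (by simp [auxEdge]) (reach_aux_wT_of_reach h)⟩
  exact ⟨key, fun S => by simp only [key]⟩
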